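/- arXiv:math/0003222 — 8 statements merged into one kernel-verified Lean document; each statement's English description precedes it below -/
import Mathlib

section
/- The set of discrete data with nonempty wall is finite. Precisely: the set of triples δ = (s, e, ν), where s is an integer with 0 < s < r, e is an integer, and ν : {1,…,n} × {1,…,r} → {0,1} satisfies ∑_{j=1}^r ν_{i,j} = s for each i, such that the wall W(δ) is nonempty, is a finite set; consequently there are only finitely many walls in the weight space A. -/
open Finset

/-- The weight space `A`: tuples `α` with `1 > α i 1 > ⋯ > α i r ≥ 0` for each `i`. -/
def WeightSpace (n r : ℕ) : Set (Fin n → Fin r → ℝ) :=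
  {α | ∀ i, StrictAnti (α i) ∧ (∀ j, α i j < 1) ∧ ∀ j, 0 ≤ α i j}

/-- Discrete data `δ = (s, e, ν)`: `0 < s < r`, `e : ℤ`, and `ν` taking values in `{0,1}`
with `∑ j, ν i j = s` for each `i`. -/
def IsDiscreteData (n r : ℕ) (δ : ℤ × ℤ × (Fin n → Fin r → ℤ)) : Prop :=
  0 < δ.1 ∧ δ.1 < (r : ℤ) ∧ (∀ i j, δ.2.2 i j = 0 ∨ δ.2.2 i j = 1) ∧
    ∀ i, ∑ j, δ.2.2 i j = δ.1

/-- The wall determined by discrete data `δ`. -/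
def Wall (n r : ℕ) (d : ℤ) (δ : ℤ × ℤ × (Fin n → Fin r → ℤ)) :
    Set (Fin n → Fin r → ℝ) :=
  {α ∈ WeightSpace n r |
    (δ.1 : ℝ) * ((d : ℝ) + ∑ i, ∑ j, α i j) =
      (r : ℝ) * ((δ.2.1 : ℝ) + ∑ i, ∑ j, (δ.2.2 i j : ℝ) * α i j)}

/-!
For fixed `(s, ν)` the wall equation can be solved for `e`, which becomes a continuous function of
the weights. The weight space is bounded, so this function has bounded image on it, and the image
contains only finitely many integers. Since `s` and the `0`-`1` matrix `ν` range over finite sets,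
so does `(s, e, ν)`.
-/

lemma finite_preimage_intCast_image {X : Type*} [PseudoMetricSpace X] [ProperSpace X] {f : X → ℝ}
    (hf : Continuous f) {A : Set X} (hA : Bornology.IsBounded A) :
    (((↑) : ℤ → ℝ) ⁻¹' (f '' A)).Finite := by
  have hcompact : IsCompact (((↑) : ℤ → ℝ) ⁻¹' (f '' closure A)) :=
    Int.isClosedEmbedding_coe_real.isCompact_preimage (hA.isCompact_closure.image hf)
  exact hcompact.finite_of_discrete.subset
    (Set.preimage_mono (Set.image_mono subset_closure))

section WallIn

variable {ι κ : Type*} [Fintype ι] [Fintype κ]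

/-- The wall of `δ = (s, e, ν)` inside an arbitrary set `A` of weights, for real parameters `r`
and `d`. It is `Wall n r d δ` when `A = WeightSpace n r`. -/
def wallIn (A : Set (ι → κ → ℝ)) (r d : ℝ) (δ : ℤ × ℤ × (ι → κ → ℤ)) : Set (ι → κ → ℝ) :=
  {α ∈ A | (δ.1 : ℝ) * (d + ∑ i, ∑ j, α i j) =
    r * ((δ.2.1 : ℝ) + ∑ i, ∑ j, (δ.2.2 i j : ℝ) * α i j)}

/-- For `r ≠ 0`, the value of `e` that the wall equation forces when `α` lies on the wall of
`(s, e, ν)`. It is real-valued; if it is not an integer, `α` lies on no such wall. -/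
noncomputable def wallDegree (r d : ℝ) (s : ℤ) (ν : ι → κ → ℤ) (α : ι → κ → ℝ) : ℝ :=
  s * (d + ∑ i, ∑ j, α i j) / r - ∑ i, ∑ j, (ν i j : ℝ) * α i j

lemma continuous_wallDegree (r d : ℝ) (s : ℤ) (ν : ι → κ → ℤ) :
    Continuous (wallDegree r d s ν) := by
  unfold wallDegree
  fun_prop

lemma mem_wallIn_iff_wallDegree_eq {A : Set (ι → κ → ℝ)} {r : ℝ} (hr : r ≠ 0) {d : ℝ} {s e : ℤ}
    {ν : ι → κ → ℤ} {α : ι → κ → ℝ} :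
    α ∈ wallIn A r d (s, e, ν) ↔ α ∈ A ∧ wallDegree r d s ν α = e := by
  simp only [wallIn, wallDegree, Set.mem_ofPred_eq, sub_eq_iff_eq_add, div_eq_iff hr, mul_comm r]

lemma finite_setOf_nonempty_wallIn {A : Set (ι → κ → ℝ)} (hA : Bornology.IsBounded A) {r : ℝ}
    (hr : r ≠ 0) (d : ℝ) (s : ℤ) (ν : ι → κ → ℤ) :
    {e : ℤ | (wallIn A r d (s, e, ν)).Nonempty}.Finite := by
  refine (finite_preimage_intCast_image (continuous_wallDegree r d s ν) hA).subset ?_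
  rintro e ⟨α, hα⟩
  exact ⟨α, (mem_wallIn_iff_wallDegree_eq hr).1 hα⟩

theorem finitely_many_walls_general {A : Set (ι → κ → ℝ)} (hA : Bornology.IsBounded A) {r : ℝ}
    (hr : r ≠ 0) (d : ℝ) {D : Set (ℤ × ℤ × (ι → κ → ℤ))}
    (hD : ((fun δ ↦ (δ.1, δ.2.2)) '' D).Finite) :
    {δ | δ ∈ D ∧ (wallIn A r d δ).Nonempty}.Finite ∧
      {W | ∃ δ, δ ∈ D ∧ (wallIn A r d δ).Nonempty ∧ W = wallIn A r d δ}.Finite := by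
  have hdata : {δ | δ ∈ D ∧ (wallIn A r d δ).Nonempty}.Finite := by
    refine Set.Finite.of_finite_fibers (fun δ ↦ (δ.1, δ.2.2))
      (hD.subset (Set.image_mono fun _ hδ ↦ hδ.1)) ?_
    rintro ⟨s, ν⟩ -
    refine ((finite_setOf_nonempty_wallIn hA hr d s ν).image fun e ↦ (s, e, ν)).subset ?_
    rintro ⟨_, e, _⟩ ⟨⟨-, hne⟩, ⟨⟩⟩
    exact ⟨e, hne, rfl⟩
  refine ⟨hdata, (hdata.image (wallIn A r d)).subset ?_⟩
  rintro _ ⟨δ, hδ, hne, rfl⟩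
  exact ⟨δ, ⟨hδ, hne⟩, rfl⟩

end WallIn

lemma isBounded_weightSpace (n r : ℕ) : Bornology.IsBounded (WeightSpace n r) :=
  (Metric.isBounded_Icc 0 1).subset fun _ hα ↦
    ⟨fun i j ↦ (hα i).2.2 j, fun i j ↦ ((hα i).2.1 j).le⟩

lemma finite_image_isDiscreteData (n r : ℕ) :
    ((fun δ ↦ (δ.1, δ.2.2)) '' {δ | IsDiscreteData n r δ}).Finite := by
  have hν : {ν : Fin n → Fin r → ℤ | ∀ i j, ν i j ∈ ({0, 1} : Set ℤ)}.Finite :=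
    Set.Finite.pi' fun _ ↦ Set.Finite.pi' fun _ ↦ Set.toFinite _
  refine ((Set.finite_Ioo 0 (r : ℤ)).prod hν).subset ?_
  rintro _ ⟨⟨s, e, ν⟩, ⟨hs_pos, hs_lt, hν01, -⟩, rfl⟩
  exact ⟨⟨hs_pos, hs_lt⟩, hν01⟩

/-- The set of discrete data with nonempty wall is finite; consequently there are only
finitely many walls. -/
theorem finitely_many_walls (r n : ℕ) (hr : 2 ≤ r) (hn : 1 ≤ n) (d : ℤ) :
    {δ : ℤ × ℤ × (Fin n → Fin r → ℤ) |
        IsDiscreteData n r δ ∧ (Wall n r d δ).Nonempty}.Finite ∧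
      {W : Set (Fin n → Fin r → ℝ) |
        ∃ δ, IsDiscreteData n r δ ∧ (Wall n r d δ).Nonempty ∧ W = Wall n r d δ}.Finite :=
  finitely_many_walls_general (isBounded_weightSpace n r) (Nat.cast_ne_zero.2 (by lia)) d
    (finite_image_isDiscreteData n r)
end

section
/- If δ = (s, e, ν) is discrete data whose wall W(δ) is nonempty, then |r·e − s·d| < n·r·s. (This is the quantitative bound underlying the finiteness of the set of walls: for each fixed s and ν, only finitely many integers e give a hyperplane touching the weight space A.) -/
open Finset

/-!
Split the total weight as `∑ α = B + B'`, where `B = ∑ ν α` is the part seen by the subobject and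
`B' = ∑ (1 - ν) α` the part seen by the quotient. On the wall, `r e - s d = s B' - (r - s) B`.
Since `ν` selects `s` of the `r` weights at each of the `n` points and every weight lies in
`[0, 1)`, we have `0 ≤ B < n s` and `0 ≤ B' < n (r - s)`. So `r e - s d` is a difference of two
numbers in `[0, n s (r - s))`.
-/

section WeightedSum

variable {R : Type*} [Semiring R] [PartialOrder R] [IsStrictOrderedRing R]

theorem sum_mul_mem_Ico {ι : Type*} {t : Finset ι} {w x : ι → R} (hw : ∀ i ∈ t, 0 ≤ w i)
    (hpos : 0 < ∑ i ∈ t, w i) (hx : ∀ i ∈ t, x i ∈ Set.Ico 0 1) :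
    ∑ i ∈ t, w i * x i ∈ Set.Ico 0 (∑ i ∈ t, w i) := by
  obtain ⟨k, hk, hwk⟩ := exists_ne_zero_of_sum_ne_zero hpos.ne'
  have hwk_pos : 0 < w k := (hw k hk).lt_of_ne' hwk
  exact ⟨sum_nonneg fun i hi => mul_nonneg (hw i hi) (hx i hi).1,
    sum_lt_sum (fun i hi => mul_le_of_le_one_right (hw i hi) (hx i hi).2.le)
      ⟨k, hk, mul_lt_of_lt_one_right hwk_pos (hx k hk).2⟩⟩

theorem sum_sum_mul_mem_Ico {I J : Type*} [Fintype I] [Nonempty I] [Fintype J]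
    {w x : I → J → R} {s : R} (hw : ∀ i j, 0 ≤ w i j) (hsum : ∀ i, ∑ j, w i j = s) (hs : 0 < s)
    (hx : ∀ i j, x i j ∈ Set.Ico 0 1) :
    ∑ i, ∑ j, w i j * x i j ∈ Set.Ico 0 (Fintype.card I * s) := by
  have hrow (i : I) : ∑ j, w i j * x i j ∈ Set.Ico 0 s := by
    rw [← hsum i]
    exact sum_mul_mem_Ico (fun j _ => hw i j) (hs.trans_eq (hsum i).symm) fun j _ => hx i j
  refine ⟨sum_nonneg fun i _ => (hrow i).1, ?_⟩
  calc ∑ i, ∑ j, w i j * x i j < ∑ _i : I, s :=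
        sum_lt_sum_of_nonempty univ_nonempty fun i _ => (hrow i).2
    _ = Fintype.card I * s := by rw [sum_const, card_univ, nsmul_eq_mul]

end WeightedSum

theorem wall_nonempty_bound_general {R I J : Type*} [CommRing R] [LinearOrder R]
    [IsStrictOrderedRing R] [Fintype I] [Nonempty I] [Fintype J] {d s e : R} {ν α : I → J → R}
    (hs : 0 < s) (hsr : s < Fintype.card J) (hν : ∀ i j, ν i j ∈ Set.Icc 0 1)
    (hsum : ∀ i, ∑ j, ν i j = s) (hα : ∀ i j, α i j ∈ Set.Ico 0 1)
    (hwall : s * (d + ∑ i, ∑ j, α i j) =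
      Fintype.card J * (e + ∑ i, ∑ j, ν i j * α i j)) :
    |Fintype.card J * e - s * d| < Fintype.card I * (s * (Fintype.card J - s)) := by
  have hsum_compl (i : I) : ∑ j, (1 - ν i j) = Fintype.card J - s := by
    rw [sum_sub_distrib, hsum i, sum_const, card_univ, nsmul_one]
  have hcompl_pos : 0 < Fintype.card J - s := sub_pos.mpr hsr
  have hsub := sum_sum_mul_mem_Ico (fun i j => (hν i j).1) hsum hs hα
  have hquot := sum_sum_mul_mem_Ico (fun i j => sub_nonneg.mpr (hν i j).2) hsum_compl hcompl_pos hα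
  have hsplit : ∑ i, ∑ j, α i j = ∑ i, ∑ j, ν i j * α i j + ∑ i, ∑ j, (1 - ν i j) * α i j := by
    simp only [← sum_add_distrib, ← add_mul, add_sub_cancel, one_mul]
  set B := ∑ i, ∑ j, ν i j * α i j
  set B' := ∑ i, ∑ j, (1 - ν i j) * α i j
  have hdiff : Fintype.card J * e - s * d = s * B' - (Fintype.card J - s) * B := by
    rw [hsplit] at hwall
    linear_combination -hwall
  rw [hdiff]
  refine abs_sub_lt_of_nonneg_of_lt (mul_nonneg hs.le hquot.1) ?_
    (mul_nonneg hcompl_pos.le hsub.1) ?_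
  · linear_combination s * hquot.2
  · linear_combination (Fintype.card J - s) * hsub.2

theorem abs_sub_lt_of_wall_nonempty {n r : ℕ} [NeZero n] {d s e : ℤ} {ν : Fin n → Fin r → ℤ}
    (hδ : IsDiscreteData n r (s, e, ν)) (hW : (Wall n r d (s, e, ν)).Nonempty) :
    |(r : ℤ) * e - s * d| < n * (s * (r - s)) := by
  obtain ⟨hs, hsr, hν, hsum⟩ := hδ
  obtain ⟨α, hα, hwall⟩ := hW
  have hν_mem (i : Fin n) (j : Fin r) : (ν i j : ℝ) ∈ Set.Icc 0 1 := by
    rcases hν i j with (h : ν i j = 0) | (h : ν i j = 1) <;> simp [h]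
  have hreal := wall_nonempty_bound_general (R := ℝ) (d := d) (s := s) (e := e)
    (by exact_mod_cast hs) (by simpa using mod_cast hsr) hν_mem
    (fun i => mod_cast hsum i) (fun i j => ⟨(hα i).2.2 j, (hα i).2.1 j⟩)
    (by simpa only [Fintype.card_fin] using hwall)
  simp only [Fintype.card_fin] at hreal
  exact_mod_cast hreal

/-- If the wall of discrete data `(s, e, ν)` is nonempty, then `|r·e − s·d| < n·r·s`. -/
theorem wall_nonempty_bound (r n : ℕ) (hr : 2 ≤ r) (hn : 1 ≤ n) (d : ℤ)
    (s e : ℤ) (ν : Fin n → Fin r → ℤ)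
    (hδ : IsDiscreteData n r (s, e, ν))
    (hW : (Wall n r d (s, e, ν)).Nonempty) :
    |(r : ℤ) * e - s * d| < (n : ℤ) * r * s := by
  have : NeZero n := ⟨by lia⟩
  have hs : 0 < s := hδ.1
  calc |(r : ℤ) * e - s * d| < n * (s * (r - s)) := abs_sub_lt_of_wall_nonempty hδ hW
    _ ≤ n * (s * r) := by gcongr; lia
    _ = n * r * s := by ring
end

section
/- Uniqueness of discrete data for a wall (Remark 2.6 of the paper): if δ = (s, e, ν) and δ' = (s', e', ν') are discrete data with W(δ) = W(δ') and this common wall is nonempty, then either δ' = δ, or δ' = (r − s, d − e, 1 − ν); i.e., the only other discrete data giving rise to the same wall as δ is its complement. -/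
open Finset

/-!
The wall of `δ = (s, e, ν)` is a level set of the linear functional with coefficients `s - r ν i j`.
These sum to zero along each row, so a point of the wall can be translated into the interior of the
weight space without leaving the wall. Near an interior point, an inclusion between two walls forces
their functionals to be proportional. In a row of `ν`, entries `0` and `1` both occur, and the
difference of the corresponding coefficients is `r`; hence the factor of proportionality is a
difference of two entries of `ν'`, so it is `1` or `-1`. The factor `1` gives `δ' = δ`, and the
factor `-1` gives the complement of `δ`.
-/

open Filter Topology

section LinearMap

variable {𝕜 E F G : Type*} [NontriviallyNormedField 𝕜] [AddCommGroup E] [Module 𝕜 E]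
  [TopologicalSpace E] [ContinuousAdd E] [ContinuousSMul 𝕜 E] [AddCommGroup F] [Module 𝕜 F]
  [AddCommGroup G] [Module 𝕜 G]

theorem ker_le_ker_of_eventually_eq {f : E →ₗ[𝕜] F} {g : E →ₗ[𝕜] G} {x : E}
    (h : ∀ᶠ y in 𝓝 x, f y = f x → g y = g x) : f.ker ≤ g.ker := by
  intro v hv
  have hlim : Tendsto (fun t : 𝕜 => x + t • v) (𝓝[≠] 0) (𝓝 x) := by
    have hcont : Continuous fun t : 𝕜 => x + t • v := by fun_prop
    simpa using (hcont.tendsto 0).mono_left nhdsWithin_le_nhds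
  obtain ⟨t, ht, ht0⟩ := ((hlim.eventually h).and self_mem_nhdsWithin).exists
  have hgv : t • g v = 0 := by simpa [LinearMap.mem_ker.1 hv] using ht
  exact (smul_eq_zero.1 hgv).resolve_left ht0

theorem exists_eq_smul_of_eventually_eq {f g : E →ₗ[𝕜] 𝕜} {x : E}
    (h : ∀ᶠ y in 𝓝 x, f y = f x → g y = g x) : ∃ c : 𝕜, g = c • f := by
  have hspan : g ∈ Submodule.span 𝕜 (Set.range fun _ : Unit => f) :=
    mem_span_of_iInf_ker_le_ker (by simpa using ker_le_ker_of_eventually_eq h)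
  rw [Set.range_const] at hspan
  obtain ⟨c, hc⟩ := Submodule.mem_span_singleton.1 hspan
  exact ⟨c, hc.symm⟩

end LinearMap

variable {n r : ℕ}

section WeightSpace

variable {α : Fin n → Fin r → ℝ}

theorem WeightSpace.mem_nhds_of_pos (hα : α ∈ WeightSpace n r) (hpos : ∀ i j, 0 < α i j) :
    WeightSpace n r ∈ 𝓝 α := by
  have hcont : ∀ i j, ContinuousAt (fun β : Fin n → Fin r → ℝ => β i j) α :=
    fun i j => (continuous_apply_apply i j).continuousAt
  have hanti : ∀ᶠ β in 𝓝 α, ∀ i j k, j < k → β i k < β i j := by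
    simp only [eventually_all]
    exact fun i j k hjk => (hcont i k).eventually_lt (hcont i j) ((hα i).1 hjk)
  have hlt : ∀ᶠ β in 𝓝 α, ∀ i j, β i j < 1 := by
    simp only [eventually_all]
    exact fun i j => (hcont i j).eventually_lt_const ((hα i).2.1 j)
  have hgt : ∀ᶠ β in 𝓝 α, ∀ i j, 0 < β i j := by
    simp only [eventually_all]
    exact fun i j => (hcont i j).eventually_const_lt (hpos i j)
  filter_upwards [hanti, hlt, hgt] with β h₁ h₂ h₃
  exact fun i => ⟨fun j k => h₁ i j k, h₂ i, fun j => (h₃ i j).le⟩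

theorem WeightSpace.exists_pos_translate (hα : α ∈ WeightSpace n r) :
    ∃ t : ℝ, (fun i j => α i j + t) ∈ WeightSpace n r ∧ ∀ i j, 0 < α i j + t := by
  have hsmall : ∀ᶠ t in 𝓝[>] (0 : ℝ), ∀ i j, t < 1 - α i j := by
    simp only [eventually_all]
    exact fun i j => nhdsWithin_le_nhds (eventually_lt_nhds (sub_pos.2 ((hα i).2.1 j)))
  obtain ⟨t, ht, htpos⟩ := (hsmall.and self_mem_nhdsWithin).exists
  have hpos : ∀ i j, 0 < α i j + t := fun i j => add_pos_of_nonneg_of_pos ((hα i).2.2 j) htpos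
  exact ⟨t, fun i => ⟨fun j k hjk => add_lt_add_left ((hα i).1 hjk) t,
    fun j => lt_sub_iff_add_lt'.1 (ht i j), fun j => (hpos i j).le⟩, hpos⟩

end WeightSpace

/-- The linear functional on weights with coefficients `s - r ν i j`. The wall of `δ = (s, e, ν)`
is its level set of value `r e - s d` in the weight space. -/
noncomputable def wallFunctional (δ : ℤ × ℤ × (Fin n → Fin r → ℤ)) :
    (Fin n → Fin r → ℝ) →ₗ[ℝ] ℝ :=
  ∑ i, ∑ j, ((δ.1 : ℝ) - r * δ.2.2 i j) •
    ((LinearMap.proj j : (Fin r → ℝ) →ₗ[ℝ] ℝ) ∘ₗ LinearMap.proj i)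

/-- The complement `(r - s, d - e, 1 - ν)` of the discrete data `δ = (s, e, ν)`, which
determines the same wall. -/
def complementaryData (d : ℤ) (δ : ℤ × ℤ × (Fin n → Fin r → ℤ)) :
    ℤ × ℤ × (Fin n → Fin r → ℤ) :=
  ((r : ℤ) - δ.1, d - δ.2.1, fun i j => 1 - δ.2.2 i j)

variable {d : ℤ} {δ δ' : ℤ × ℤ × (Fin n → Fin r → ℤ)} {α : Fin n → Fin r → ℝ}

theorem wallFunctional_apply :
    wallFunctional δ α = ∑ i, ∑ j, ((δ.1 : ℝ) - r * δ.2.2 i j) * α i j := by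
  simp [wallFunctional]

theorem wallFunctional_single (i : Fin n) (j : Fin r) :
    wallFunctional δ (Pi.single i (Pi.single j 1)) = (δ.1 : ℝ) - r * δ.2.2 i j := by
  rw [wallFunctional_apply, sum_eq_single i, sum_eq_single j] <;>
    simp +contextual [Pi.single_apply]

theorem wallFunctional_complementaryData :
    wallFunctional (complementaryData d δ) = -wallFunctional δ := by
  refine LinearMap.ext fun α => ?_
  simp only [LinearMap.neg_apply, wallFunctional_apply, complementaryData, ← sum_neg_distrib]
  refine sum_congr rfl fun i _ => sum_congr rfl fun j _ => ?_
  push_cast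
  ring

theorem mem_wall_iff :
    α ∈ Wall n r d δ ↔
      α ∈ WeightSpace n r ∧ wallFunctional δ α = (r : ℝ) * δ.2.1 - δ.1 * d := by
  have hsplit : wallFunctional δ α =
      δ.1 * ∑ i, ∑ j, α i j - r * ∑ i, ∑ j, (δ.2.2 i j : ℝ) * α i j := by
    simp only [wallFunctional_apply, sub_mul, sum_sub_distrib, mul_sum, mul_assoc]
  rw [hsplit]
  refine and_congr_right fun _ => ?_
  constructor <;> intro h <;> linarith

theorem wall_complementaryData : Wall n r d (complementaryData d δ) = Wall n r d δ := by
  ext α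
  rw [mem_wall_iff, mem_wall_iff, wallFunctional_complementaryData]
  simp only [LinearMap.neg_apply, complementaryData]
  push_cast
  refine and_congr_right fun _ => ?_
  constructor <;> intro h <;> linarith

namespace IsDiscreteData

protected theorem complementaryData (d : ℤ) (hδ : IsDiscreteData n r δ) :
    IsDiscreteData n r (complementaryData d δ) := by
  obtain ⟨hs_pos, hs_lt, hν, hsum⟩ := hδ
  refine ⟨sub_pos.2 hs_lt, sub_lt_self _ hs_pos, fun i j => ?_, fun i => ?_⟩
  · rcases hν i j with h | h <;> simp [complementaryData, h]
  · simp [complementaryData, sum_sub_distrib, hsum i]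

theorem exists_eq_one (hδ : IsDiscreteData n r δ) (i : Fin n) : ∃ j, δ.2.2 i j = 1 := by
  obtain ⟨hs_pos, -, hν, hsum⟩ := hδ
  obtain ⟨j, -, hj⟩ := exists_ne_zero_of_sum_ne_zero (hsum i ▸ hs_pos.ne')
  exact ⟨j, (hν i j).resolve_left hj⟩

theorem exists_eq_zero (hδ : IsDiscreteData n r δ) (i : Fin n) : ∃ j, δ.2.2 i j = 0 := by
  obtain ⟨j, hj⟩ := (hδ.complementaryData 0).exists_eq_one i
  exact ⟨j, sub_eq_self.1 hj⟩

theorem wallFunctional_const (hδ : IsDiscreteData n r δ) (t : ℝ) :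
    wallFunctional δ (fun _ _ => t) = 0 := by
  have hrow : ∀ i, ∑ j, ((δ.1 : ℝ) - r * δ.2.2 i j) = 0 := fun i => by
    rw [sum_sub_distrib, ← mul_sum, ← Int.cast_sum univ (δ.2.2 i), hδ.2.2.2 i]
    simp
  simp only [wallFunctional_apply, ← sum_mul, hrow, zero_mul, sum_const_zero]

theorem exists_pos_mem_wall (hδ : IsDiscreteData n r δ) (hne : (Wall n r d δ).Nonempty) :
    ∃ α ∈ Wall n r d δ, ∀ i j, 0 < α i j := by
  obtain ⟨α, hα⟩ := hne
  obtain ⟨hmem, hval⟩ := mem_wall_iff.1 hα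
  obtain ⟨t, ht, hpos⟩ := WeightSpace.exists_pos_translate hmem
  refine ⟨_, mem_wall_iff.2 ⟨ht, ?_⟩, hpos⟩
  calc wallFunctional δ (fun i j => α i j + t)
      = wallFunctional δ α + wallFunctional δ (fun _ _ => t) := map_add _ α fun _ _ => t
    _ = r * δ.2.1 - δ.1 * d := by rw [hδ.wallFunctional_const, add_zero, hval]

theorem eq_of_wallFunctional_eq (i : Fin n) (hδ : IsDiscreteData n r δ)
    (hδ' : IsDiscreteData n r δ') (h : wallFunctional δ' = wallFunctional δ)
    (hα : α ∈ Wall n r d δ) (hα' : α ∈ Wall n r d δ') : δ' = δ := by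
  obtain ⟨j, -⟩ := hδ.exists_eq_one i
  obtain ⟨hs_pos, hs_lt, -⟩ := hδ
  obtain ⟨hs_pos', hs_lt', -⟩ := hδ'
  have hr : (r : ℤ) ≠ 0 := (hs_pos.trans hs_lt).ne'
  have hcoeff : ∀ i j, δ'.1 - r * δ'.2.2 i j = δ.1 - r * δ.2.2 i j := fun i j => by
    have hsingle := wallFunctional_single (δ := δ') i j
    rw [h, wallFunctional_single] at hsingle
    exact_mod_cast hsingle.symm
  have hs : δ'.1 = δ.1 := by
    have hdvd : (r : ℤ) ∣ δ'.1 - δ.1 := ⟨δ'.2.2 i j - δ.2.2 i j, by linarith [hcoeff i j]⟩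
    exact sub_eq_zero.1 (Int.eq_zero_of_abs_lt_dvd hdvd (abs_lt.2 ⟨by linarith, by linarith⟩))
  have hν : δ'.2.2 = δ.2.2 := by
    ext i j
    exact mul_left_cancel₀ hr (by linarith [hcoeff i j])
  have he : δ'.2.1 = δ.2.1 := by
    have hval : (r : ℝ) * δ'.2.1 - δ'.1 * d = r * δ.2.1 - δ.1 * d := by
      rw [← (mem_wall_iff.1 hα').2, h, (mem_wall_iff.1 hα).2]
    rw [hs, sub_left_inj] at hval
    exact mul_left_cancel₀ hr (by exact_mod_cast hval)
  exact Prod.ext hs (Prod.ext he hν)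

theorem eq_one_or_eq_neg_one_of_wallFunctional_eq_smul (i : Fin n) (hδ : IsDiscreteData n r δ)
    (hδ' : IsDiscreteData n r δ') {c : ℝ} (h : wallFunctional δ' = c • wallFunctional δ) :
    c = 1 ∨ c = -1 := by
  have hcoeff : ∀ i j, (δ'.1 : ℝ) - r * δ'.2.2 i j = c * (δ.1 - r * δ.2.2 i j) := fun i j => by
    rw [← wallFunctional_single, h, LinearMap.smul_apply, wallFunctional_single, smul_eq_mul]
  obtain ⟨j₀, hj₀⟩ := hδ.exists_eq_zero i
  obtain ⟨j₁, hj₁⟩ := hδ.exists_eq_one i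
  obtain ⟨hs_pos', hs_lt', hν', -⟩ := hδ'
  have hr : (0 : ℝ) < r := by exact_mod_cast hs_pos'.trans hs_lt'
  have hdiff : c = δ'.2.2 i j₁ - δ'.2.2 i j₀ := by
    have h₀ := hcoeff i j₀
    have h₁ := hcoeff i j₁
    rw [hj₀] at h₀
    rw [hj₁] at h₁
    push_cast at h₀ h₁
    exact mul_left_cancel₀ hr.ne' (by linarith)
  have hc : c ≠ 0 := by
    rintro rfl
    have hs' : δ'.1 = r * δ'.2.2 i j₀ := by
      have h₀ := hcoeff i j₀
      rw [zero_mul, sub_eq_zero] at h₀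
      exact_mod_cast h₀
    rcases hν' i j₀ with h₀ | h₀ <;> rw [h₀] at hs' <;> linarith
  rcases hν' i j₀ with h₀ | h₀ <;> rcases hν' i j₁ with h₁ | h₁ <;>
    rw [h₀, h₁] at hdiff <;> simp_all

end IsDiscreteData

theorem exists_wallFunctional_eq_smul_of_wall_subset (hsub : Wall n r d δ ⊆ Wall n r d δ')
    (hα : α ∈ Wall n r d δ) (hpos : ∀ i j, 0 < α i j) :
    ∃ c : ℝ, wallFunctional δ' = c • wallFunctional δ := by
  obtain ⟨hmem, hval⟩ := mem_wall_iff.1 hα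
  refine exists_eq_smul_of_eventually_eq (x := α) ?_
  filter_upwards [WeightSpace.mem_nhds_of_pos hmem hpos] with β hβ hβα
  have hβ' : β ∈ Wall n r d δ' := hsub (mem_wall_iff.2 ⟨hβ, hβα.trans hval⟩)
  exact (mem_wall_iff.1 hβ').2.trans (mem_wall_iff.1 (hsub hα)).2.symm

theorem wall_determines_discreteData_general (hn : 0 < n) (hδ : IsDiscreteData n r δ)
    (hδ' : IsDiscreteData n r δ') (hsub : Wall n r d δ ⊆ Wall n r d δ')
    (hne : (Wall n r d δ).Nonempty) : δ' = δ ∨ δ' = complementaryData d δ := by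
  obtain ⟨α, hα, hpos⟩ := hδ.exists_pos_mem_wall hne
  obtain ⟨c, hc⟩ := exists_wallFunctional_eq_smul_of_wall_subset hsub hα hpos
  rcases hδ.eq_one_or_eq_neg_one_of_wallFunctional_eq_smul ⟨0, hn⟩ hδ' hc with rfl | rfl
  · rw [one_smul] at hc
    exact .inl (hδ.eq_of_wallFunctional_eq ⟨0, hn⟩ hδ' hc hα (hsub hα))
  · have hneg : wallFunctional δ' = wallFunctional (complementaryData d δ) := by
      rw [hc, wallFunctional_complementaryData]
      module
    have hα_compl : α ∈ Wall n r d (complementaryData d δ) := by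
      rwa [wall_complementaryData]
    exact .inr ((hδ.complementaryData d).eq_of_wallFunctional_eq ⟨0, hn⟩ hδ' hneg hα_compl
      (hsub hα))

/-- Remark 2.6: the only other discrete data giving rise to the same nonempty wall as
`(s, e, ν)` is the complement `(r − s, d − e, 1 − ν)`. -/
theorem wall_determines_discreteData (r n : ℕ) (hr : 2 ≤ r) (hn : 1 ≤ n) (d : ℤ)
    (s e : ℤ) (ν : Fin n → Fin r → ℤ) (s' e' : ℤ) (ν' : Fin n → Fin r → ℤ)
    (hδ : IsDiscreteData n r (s, e, ν)) (hδ' : IsDiscreteData n r (s', e', ν'))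
    (hW : Wall n r d (s, e, ν) = Wall n r d (s', e', ν'))
    (hne : (Wall n r d (s, e, ν)).Nonempty) :
    (s', e', ν') = (s, e, ν) ∨
      (s', e', ν') = ((r : ℤ) - s, d - e, fun i j => 1 - ν i j) :=
  wall_determines_discreteData_general hn hδ hδ' hW.subset hne
end

section
/- Let A ⊆ ℝ^N be a nonempty open convex set, and let f, g : ℝ^N → ℝ be affine functions (each of the form x ↦ ℓ(x) + c with ℓ linear) whose linear parts are nonzero. If { x ∈ A : f(x) = 0 } = { x ∈ A : g(x) = 0 } and this common zero set is nonempty, then there exists a nonzero real number c such that g = c·f. -/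
/-!
At a common zero `p`, moving from `p` by a small multiple of a vector killed by the linear part of
`f` stays both in the open set and in the zero locus of `f`, hence in that of `g`; so the kernel of
the linear part of `f` lies in that of `g`. For functionals this makes the linear parts
proportional, and agreement at `p` takes care of the constant terms.
-/

open Filter Topology

section LinearFunctional

variable {K V : Type*} [Field K] [AddCommGroup V] [Module K V]

theorem exists_eq_smul_of_ker_le_ker {L M : V →ₗ[K] K} (h : L.ker ≤ M.ker) :
    ∃ c : K, M = c • L := by
  have hspan : M ∈ Submodule.span K (Set.range fun _ : Unit => L) :=
    mem_span_of_iInf_ker_le_ker (by rwa [iInf_const])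
  rw [Set.range_const, Submodule.mem_span_singleton] at hspan
  exact hspan.imp fun _ => Eq.symm

end LinearFunctional

section AffineMap

variable {𝕜 V P : Type*} [Field 𝕜] [TopologicalSpace 𝕜] [(𝓝[≠] (0 : 𝕜)).NeBot]
  [AddCommGroup V] [Module 𝕜 V] [TopologicalSpace V] [ContinuousSMul 𝕜 V]
  [AddTorsor V P] [TopologicalSpace P] [ContinuousVAdd V P]

theorem ker_linear_le_ker_linear_of_eventually_eq_imp {W₁ W₂ Q₁ Q₂ : Type*}
    [AddCommGroup W₁] [Module 𝕜 W₁] [AddTorsor W₁ Q₁]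
    [AddCommGroup W₂] [Module 𝕜 W₂] [AddTorsor W₂ Q₂]
    {f : P →ᵃ[𝕜] Q₁} {g : P →ᵃ[𝕜] Q₂} {p : P} (h : ∀ᶠ x in 𝓝 p, f x = f p → g x = g p) :
    f.linear.ker ≤ g.linear.ker := by
  intro v hv
  rw [LinearMap.mem_ker] at hv ⊢
  have hline : Tendsto (fun t : 𝕜 => t • v +ᵥ p) (𝓝[≠] 0) (𝓝 p) := by
    have hcont : Continuous fun t : 𝕜 => t • v +ᵥ p := by fun_prop
    simpa using (hcont.tendsto 0).mono_left nhdsWithin_le_nhds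
  obtain ⟨t, hgt, ht⟩ := ((hline.eventually h).and eventually_mem_nhdsWithin).exists
  have hft : f (t • v +ᵥ p) = f p := by simp [hv]
  have hsmul : t • g.linear v = 0 := vadd_right_cancel (g p) <| by
    rw [zero_vadd, ← map_smul, ← AffineMap.map_vadd, hgt hft]
  exact (smul_eq_zero.1 hsmul).resolve_left ht

theorem exists_eq_smul_of_eventually_eq_zero_imp {f g : P →ᵃ[𝕜] 𝕜} {p : P} (hf : f p = 0)
    (h : ∀ᶠ x in 𝓝 p, f x = 0 → g x = 0) : ∃ c : 𝕜, g = c • f := by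
  have hg : g p = 0 := h.self_of_nhds hf
  have hker : f.linear.ker ≤ g.linear.ker :=
    ker_linear_le_ker_linear_of_eventually_eq_imp (p := p) (by rwa [hf, hg])
  obtain ⟨c, hc⟩ := exists_eq_smul_of_ker_le_ker hker
  exact ⟨c, AffineMap.ext_linear hc (p := p) (by simp [hf, hg])⟩

theorem affine_functions_same_zero_locus_general {A : Set P} (hA : IsOpen A) {f g : P →ᵃ[𝕜] 𝕜}
    (hg : g.linear ≠ 0) (hsub : {x ∈ A | f x = 0} ⊆ {x ∈ A | g x = 0})
    (hne : {x ∈ A | f x = 0}.Nonempty) : ∃ c : 𝕜, c ≠ 0 ∧ g = c • f := by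
  obtain ⟨p, hpA, hfp⟩ := hne
  have hlocal : ∀ᶠ x in 𝓝 p, f x = 0 → g x = 0 := by
    filter_upwards [hA.mem_nhds hpA] with x hxA hfx using (hsub ⟨hxA, hfx⟩).2
  obtain ⟨c, rfl⟩ := exists_eq_smul_of_eventually_eq_zero_imp hfp hlocal
  exact ⟨c, fun hc => hg (by simp [hc]), rfl⟩

end AffineMap

/-- Two affine functions with nonzero linear parts cutting out the same nonempty zero
locus inside a nonempty open convex set `A ⊆ ℝ^N` are proportional by a nonzero constant. -/
theorem affine_functions_same_zero_locus (N : ℕ) (hN : 1 ≤ N)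
    (A : Set (Fin N → ℝ)) (hA : A.Nonempty) (hAopen : IsOpen A) (hAconv : Convex ℝ A)
    (f g : (Fin N → ℝ) → ℝ)
    (L M : (Fin N → ℝ) →ₗ[ℝ] ℝ) (a b : ℝ)
    (hL : L ≠ 0) (hM : M ≠ 0)
    (hf : ∀ x, f x = L x + a) (hg : ∀ x, g x = M x + b)
    (hEq : {x ∈ A | f x = 0} = {x ∈ A | g x = 0})
    (hne : {x ∈ A | f x = 0}.Nonempty) :
    ∃ c : ℝ, c ≠ 0 ∧ g = fun x => c * f x := by
  obtain ⟨c, hc, hgf⟩ := affine_functions_same_zero_locus_general hAopen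
    (f := ⟨f, L, fun p v => by simp [hf, add_assoc]⟩)
    (g := ⟨g, M, fun p v => by simp [hg, add_assoc]⟩) hM hEq.subset hne
  exact ⟨c, hc, congrArg DFunLike.coe hgf⟩
end

section
/- A polynomial f ∈ R is invariant under the ℂˣ-action, i.e. satisfies f(λu, λ⁻¹v) = f(u, v) for all λ ∈ ℂˣ, u ∈ ℂ^{m+1}, v ∈ ℂ^{n+1} (where f is evaluated by substituting λu_i for x_i and λ⁻¹v_j for y_j), if and only if f belongs to the ℂ-subalgebra of R generated by the (m+1)(n+1) products x_i·y_j. -/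
open MvPolynomial

/-- The variables of `R = ℂ[x_0,…,x_m, y_0,…,y_n]`: `inl i` is `x_i`, `inr j` is `y_j`. -/
abbrev XYVar (m n : ℕ) := Sum (Fin (m + 1)) (Fin (n + 1))

/-!
Give each `x_i` weight `1` and each `y_j` weight `-1`. Scaling by `(λ, λ⁻¹)` multiplies a monomial
of weight `k` by `λ ^ k`, and only `k = 0` makes this trivial for all units `λ`, because there are
finitely many roots of unity of each order; so the invariants are the polynomials of weight `0`.
A monomial of weight `0` has as many factors `x_i` as factors `y_j`, and pairing them off in any way
exhibits it as a product of `x_i * y_j`.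
-/

section Units

lemma infinite_units (K : Type*) [GroupWithZero K] [Infinite K] : Infinite Kˣ :=
  unitsEquivNeZero.infinite_iff.mpr (Set.finite_singleton (0 : K)).infinite_compl.to_subtype

lemma eq_of_forall_units_zpow_eq {R : Type*} [CommRing R] [IsDomain R] [Infinite Rˣ] {a b : ℤ}
    (h : ∀ l : Rˣ, l ^ a = l ^ b) : a = b := by
  by_contra hab
  have : NeZero (a - b).natAbs := ⟨Int.natAbs_ne_zero.mpr (sub_ne_zero.mpr hab)⟩
  have mem_roots (l : Rˣ) : l ∈ rootsOfUnity (a - b).natAbs R := by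
    rw [mem_rootsOfUnity, pow_natAbs_eq_one, zpow_sub, h, mul_inv_cancel]
  have : Finite Rˣ := .of_injective (fun l ↦ (⟨l, mem_roots l⟩ : rootsOfUnity (a - b).natAbs R))
    fun _ _ hl ↦ congrArg Subtype.val hl
  exact not_finite Rˣ

end Units

lemma prod_zpow_pow_eq_zpow_weight {σ G : Type*} [CommGroup G] (w : σ → ℤ) (g : G) (d : σ →₀ ℕ) :
    (d.prod fun i k ↦ (g ^ w i) ^ k) = g ^ Finsupp.weight w d := by
  induction d using Finsupp.induction_linear with
  | zero => rw [Finsupp.prod_zero_index, map_zero, zpow_zero]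
  | add d e hd he =>
    rw [Finsupp.prod_add_index' (fun _ ↦ pow_zero _) (fun _ ↦ pow_add _), hd, he, map_add, zpow_add]
  | single i k =>
    rw [Finsupp.prod_single_index (h := fun i k ↦ (g ^ w i) ^ k) (pow_zero _),
      Finsupp.weight_single, nsmul_eq_mul, mul_comm, zpow_mul, zpow_natCast]

section RescaleVars

variable {σ R : Type*} [CommSemiring R]

/-- The substitution `x_i ↦ a_i * x_i` on polynomials: the polynomial counterpart of
`MvPowerSeries.rescale`, used to express the action of a diagonal torus. -/
noncomputable def rescaleVars (a : σ → R) : MvPolynomial σ R →ₐ[R] MvPolynomial σ R :=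
  bind₁ fun i ↦ C (a i) * X i

lemma eval_rescaleVars (a x : σ → R) (f : MvPolynomial σ R) :
    eval x (rescaleVars a f) = eval (fun i ↦ a i * x i) f := by
  simp only [rescaleVars, eval, eval₂Hom_bind₁, map_mul, eval₂Hom_C, eval₂Hom_X', RingHom.id_apply]

lemma rescaleVars_monomial (a : σ → R) (d : σ →₀ ℕ) (c : R) :
    rescaleVars a (monomial d c) = monomial d ((d.prod fun i k ↦ a i ^ k) * c) := by
  rw [rescaleVars, bind₁_monomial, monomial_eq, map_mul]
  simp only [mul_pow, Finsupp.prod, Finset.prod_mul_distrib, map_prod, map_pow]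
  ring

lemma coeff_rescaleVars (a : σ → R) (f : MvPolynomial σ R) (d : σ →₀ ℕ) :
    coeff d (rescaleVars a f) = (d.prod fun i k ↦ a i ^ k) * coeff d f := by
  classical
  induction f using MvPolynomial.induction_on' with
  | monomial e c =>
    rw [rescaleVars_monomial, coeff_monomial, coeff_monomial]
    split_ifs with h
    · rw [h]
    · rw [mul_zero]
  | add p q hp hq => rw [map_add, coeff_add, coeff_add, hp, hq, mul_add]

lemma coeff_rescaleVars_zpow (w : σ → ℤ) (l : Rˣ) (f : MvPolynomial σ R) (d : σ →₀ ℕ) :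
    coeff d (rescaleVars (fun i ↦ ((l ^ w i : Rˣ) : R)) f) =
      ((l ^ Finsupp.weight w d : Rˣ) : R) * coeff d f := by
  rw [coeff_rescaleVars, ← prod_zpow_pow_eq_zpow_weight]
  simp only [Finsupp.prod, Units.coe_prod, Units.val_pow_eq_pow_val]

end RescaleVars

section TorusAction

variable {σ R : Type*} [CommRing R] [IsDomain R] [Infinite Rˣ]

lemma isWeightedHomogeneous_iff_rescaleVars_zpow {w : σ → ℤ} {n : ℤ} {f : MvPolynomial σ R} :
    IsWeightedHomogeneous w f n ↔
      ∀ l : Rˣ, rescaleVars (fun i ↦ ((l ^ w i : Rˣ) : R)) f = C ((l ^ n : Rˣ) : R) * f := by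
  simp only [MvPolynomial.ext_iff, coeff_rescaleVars_zpow, coeff_C_mul]
  constructor
  · intro hf l d
    by_cases hd : coeff d f = 0
    · rw [hd, mul_zero, mul_zero]
    · rw [hf hd]
  · intro hf d hd
    exact eq_of_forall_units_zpow_eq fun l ↦ Units.ext (mul_right_cancel₀ hd (hf l d))

lemma isWeightedHomogeneous_iff_eval_zpow {w : σ → ℤ} {n : ℤ} {f : MvPolynomial σ R} :
    IsWeightedHomogeneous w f n ↔ ∀ (l : Rˣ) (x : σ → R),
      eval (fun i ↦ ((l ^ w i : Rˣ) : R) * x i) f = ((l ^ n : Rˣ) : R) * eval x f := by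
  have : Infinite R := .of_injective Units.val Units.val_injective
  simp only [isWeightedHomogeneous_iff_rescaleVars_zpow, MvPolynomial.funext_iff,
    eval_rescaleVars, map_mul, eval_C]

end TorusAction

section Pairing

lemma prod_map_mul_prod_map_mem {ι κ M : Type*} [CommMonoid M] (N : Submonoid M) {f : ι → M}
    {g : κ → M} (hfg : ∀ i j, f i * g j ∈ N) {s : Multiset ι} {t : Multiset κ}
    (hst : s.card = t.card) : (s.map f).prod * (t.map g).prod ∈ N := by
  induction s using Multiset.induction generalizing t with
  | empty =>
    rw [Multiset.card_eq_zero.mp hst.symm, Multiset.map_zero, Multiset.map_zero,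
      Multiset.prod_zero, one_mul]
    exact N.one_mem
  | cons i s ih =>
    rw [Multiset.card_cons] at hst
    obtain ⟨j, t, rfl, ht⟩ := Multiset.card_eq_succ_iff.mp hst.symm
    rw [Multiset.map_cons, Multiset.map_cons, Multiset.prod_cons, Multiset.prod_cons,
      mul_mul_mul_comm]
    exact N.mul_mem (hfg i j) (ih ht.symm)

lemma prod_map_toMultiset {ι M : Type*} [CommMonoid M] (d : ι →₀ ℕ) (f : ι → M) :
    (d.toMultiset.map f).prod = d.prod fun i k ↦ f i ^ k := by
  rw [Finsupp.toMultiset_map, Finsupp.prod_toMultiset,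
    Finsupp.prod_mapDomain_index (fun _ ↦ pow_zero _) fun _ _ _ ↦ pow_add _ _ _]

lemma finsuppProd_pow_mul_finsuppProd_pow_mem {ι κ M : Type*} [CommMonoid M] (N : Submonoid M)
    {f : ι → M} {g : κ → M} (hfg : ∀ i j, f i * g j ∈ N) {a : ι →₀ ℕ} {b : κ →₀ ℕ}
    (hab : a.degree = b.degree) :
    (a.prod fun i k ↦ f i ^ k) * (b.prod fun j k ↦ g j ^ k) ∈ N := by
  rw [← prod_map_toMultiset, ← prod_map_toMultiset]
  refine prod_map_mul_prod_map_mem N hfg ?_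
  rw [Finsupp.card_toMultiset, Finsupp.card_toMultiset]
  exact hab

variable {σ τ R : Type*}

/-- The weights of the action `(u, v) ↦ (λu, λ⁻¹v)` on the two blocks of variables: `λ` scales the
variable `k` by `λ ^ hyperbolicWeight k`. -/
def hyperbolicWeight : σ ⊕ τ → ℤ := Sum.elim 1 (-1)

lemma weight_hyperbolicWeight (a : σ →₀ ℕ) (b : τ →₀ ℕ) :
    Finsupp.weight hyperbolicWeight (a.sumElim b) = (a.degree - b.degree : ℤ) := by
  rw [Finsupp.weight_apply, Finsupp.sum_sumElim]
  simp [hyperbolicWeight, Finsupp.sum, Finsupp.degree_apply, sub_eq_add_neg]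

variable [CommSemiring R]

lemma monomial_mem_adjoin_of_weight_eq_zero {d : σ ⊕ τ →₀ ℕ}
    (hd : Finsupp.weight hyperbolicWeight d = 0) (c : R) :
    monomial d c ∈ Algebra.adjoin R {p : MvPolynomial (σ ⊕ τ) R |
      ∃ i j, p = X (Sum.inl i) * X (Sum.inr j)} := by
  obtain ⟨⟨a, b⟩, rfl⟩ := Finsupp.sumFinsuppEquivProdFinsupp.symm.surjective d
  rw [Finsupp.sumFinsuppEquivProdFinsupp_symm_apply] at hd ⊢
  have degree_eq : a.degree = b.degree := by
    rwa [weight_hyperbolicWeight, sub_eq_zero, Nat.cast_inj] at hd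
  rw [monomial_eq, Finsupp.prod_sumElim, ← smul_eq_C_mul]
  set A := Algebra.adjoin R {p : MvPolynomial (σ ⊕ τ) R |
    ∃ i j, p = X (Sum.inl i) * X (Sum.inr j)}
  have X_mul_X_mem (i : σ) (j : τ) : X (Sum.inl i) * X (Sum.inr j) ∈ A :=
    Algebra.subset_adjoin ⟨i, j, rfl⟩
  exact A.smul_mem (finsuppProd_pow_mul_finsuppProd_pow_mem A.toSubsemiring.toSubmonoid
    X_mul_X_mem degree_eq) c

lemma isWeightedHomogeneous_hyperbolicWeight_zero_iff_mem_adjoin {f : MvPolynomial (σ ⊕ τ) R} :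
    IsWeightedHomogeneous hyperbolicWeight f 0 ↔
      f ∈ Algebra.adjoin R {p : MvPolynomial (σ ⊕ τ) R |
        ∃ i j, p = X (Sum.inl i) * X (Sum.inr j)} := by
  constructor
  · intro hf
    rw [f.as_sum]
    exact sum_mem fun d hd ↦
      monomial_mem_adjoin_of_weight_eq_zero (hf (mem_support_iff.mp hd)) _
  · intro hf
    induction hf using Algebra.adjoin_induction with
    | mem p hp =>
      obtain ⟨i, j, rfl⟩ := hp
      exact (isWeightedHomogeneous_X R hyperbolicWeight (Sum.inl i)).mul
        (isWeightedHomogeneous_X R hyperbolicWeight (Sum.inr j))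
    | algebraMap r => exact isWeightedHomogeneous_C hyperbolicWeight r
    | add p q _ _ hp hq => exact hp.add hq
    | mul p q _ _ hp hq => exact hp.mul hq

end Pairing

theorem invariant_iff_mem_adjoin_general {σ τ R : Type*} [CommRing R] [IsDomain R] [Infinite Rˣ]
    (f : MvPolynomial (σ ⊕ τ) R) :
    (∀ (l : Rˣ) (u : σ → R) (v : τ → R),
        eval (Sum.elim (fun i ↦ (l : R) * u i) (fun j ↦ ((l⁻¹ : Rˣ) : R) * v j)) f =
          eval (Sum.elim u v) f) ↔
      f ∈ Algebra.adjoin R {p : MvPolynomial (σ ⊕ τ) R |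
        ∃ i j, p = X (Sum.inl i) * X (Sum.inr j)} := by
  have torus_eq (l : Rˣ) (u : σ → R) (v : τ → R) :
      (fun k ↦ ((l ^ hyperbolicWeight k : Rˣ) : R) * Sum.elim u v k) =
        Sum.elim (fun i ↦ (l : R) * u i) (fun j ↦ ((l⁻¹ : Rˣ) : R) * v j) := by
    ext (i | j) <;> simp [hyperbolicWeight]
  rw [← isWeightedHomogeneous_hyperbolicWeight_zero_iff_mem_adjoin,
    isWeightedHomogeneous_iff_eval_zpow]
  simp only [← torus_eq, zpow_zero, Units.val_one, one_mul]
  refine forall_congr' fun l ↦ ⟨fun h x ↦ ?_, fun h u v ↦ h (Sum.elim u v)⟩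
  simpa only [Sum.elim_comp_inl_inr] using h (x ∘ Sum.inl) (x ∘ Sum.inr)

/-- A polynomial `f ∈ ℂ[x_0,…,x_m, y_0,…,y_n]` satisfies `f(λu, λ⁻¹v) = f(u, v)` for all
`λ ∈ ℂˣ`, `u ∈ ℂ^{m+1}`, `v ∈ ℂ^{n+1}` if and only if it belongs to the `ℂ`-subalgebra
generated by the products `x_i·y_j`. -/
theorem invariant_iff_mem_adjoin (m n : ℕ) (f : MvPolynomial (XYVar m n) ℂ) :
    (∀ (l : ℂˣ) (u : Fin (m + 1) → ℂ) (v : Fin (n + 1) → ℂ),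
        eval (Sum.elim (fun i => (l : ℂ) * u i) (fun j => (l : ℂ)⁻¹ * v j)) f =
          eval (Sum.elim u v) f) ↔
      f ∈ Algebra.adjoin ℂ {p : MvPolynomial (XYVar m n) ℂ |
        ∃ (i : Fin (m + 1)) (j : Fin (n + 1)), p = X (Sum.inl i) * X (Sum.inr j)} := by
  have := infinite_units ℂ
  simpa only [Units.val_inv_eq_inv_val] using invariant_iff_mem_adjoin_general f
end

section
/- For points (u, v) and (u', v') of X = ℂ^{m+1} × ℂ^{n+1}, the closures (in the Euclidean topology of X) of the ℂˣ-orbits of (u, v) and of (u', v') have nonempty intersection if and only if u_i·v_j = u'_i·v'_j for all 0 ≤ i ≤ m and 0 ≤ j ≤ n. (Thus orbit-closure equivalence is exactly equality of all the invariants x_i y_j, as in the identification of the affine quotient X/G with Spec R_0.) -/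
/-- The `ℂˣ`-orbit of `(u, v) ∈ ℂ^{m+1} × ℂ^{n+1}` under `λ·(u, v) = (λu, λ⁻¹v)`. -/
def cxOrbit (m n : ℕ) (u : Fin (m + 1) → ℂ) (v : Fin (n + 1) → ℂ) :
    Set ((Fin (m + 1) → ℂ) × (Fin (n + 1) → ℂ)) :=
  {p | ∃ l : ℂˣ, p = (fun i => (l : ℂ) * u i, fun j => (l : ℂ)⁻¹ * v j)}

/-!
Every product `u i * v j` is constant on orbits and continuous, hence constant on orbit closures.
Conversely, these products are the entries of the matrix `vecMulVec u v`. If it is nonzero, it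
determines `u` and `v` up to reciprocal scalars, so the two orbits coincide. If it vanishes, then
`u = 0` or `v = 0`, and letting `c⁻¹` or `c` tend to `0` shows that `0` lies in both closures.
-/

open Filter Matrix Topology

section Orbit

variable (𝕜 : Type*) {E F : Type*} [DivisionRing 𝕜] [AddCommMonoid E] [Module 𝕜 E]
  [AddCommMonoid F] [Module 𝕜 F]

/-- The orbit of `(x, y)` under the action `c • (x, y) = (c • x, c⁻¹ • y)` of `𝕜ˣ` on `E × F`,
the coordinate-free form of `cxOrbit`. -/
def hyperbolicOrbit (x : E) (y : F) : Set (E × F) :=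
  Set.range fun c : 𝕜ˣ ↦ (c • x, c⁻¹ • y)

theorem cxOrbit_eq_hyperbolicOrbit (m n : ℕ) (u : Fin (m + 1) → ℂ) (v : Fin (n + 1) → ℂ) :
    cxOrbit m n u v = hyperbolicOrbit ℂ u v := by
  ext p
  simp only [cxOrbit, hyperbolicOrbit, Set.mem_ofPred_eq, Set.mem_range, eq_comm (a := p),
    Units.smul_def, Units.val_inv_eq_inv_val]
  rfl

theorem mem_hyperbolicOrbit_self (x : E) (y : F) : (x, y) ∈ hyperbolicOrbit 𝕜 x y :=
  ⟨1, by simp⟩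

theorem zero_mem_closure_hyperbolicOrbit [TopologicalSpace 𝕜] [(𝓝[≠] (0 : 𝕜)).NeBot]
    [TopologicalSpace E] [ContinuousSMul 𝕜 E] [TopologicalSpace F] [ContinuousSMul 𝕜 F]
    {x : E} {y : F} (h : x = 0 ∨ y = 0) : 0 ∈ closure (hyperbolicOrbit 𝕜 x y) := by
  have tendsto_zero : Tendsto (fun c : 𝕜 ↦ (c • x, c • y)) (𝓝[≠] 0) (𝓝 0) := by
    have continuous_smul : Continuous fun c : 𝕜 ↦ (c • x, c • y) := by fun_prop
    exact (continuous_smul.tendsto' 0 0 (by simp)).mono_left nhdsWithin_le_nhds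
  refine mem_closure_of_tendsto tendsto_zero ?_
  filter_upwards [self_mem_nhdsWithin] with c (hc : c ≠ 0)
  rcases h with rfl | rfl
  · exact ⟨(Units.mk0 c hc)⁻¹, by simp [Units.smul_mk0]⟩
  · exact ⟨Units.mk0 c hc, by simp [Units.smul_mk0]⟩

end Orbit

section Invariants

theorem eq_zero_or_eq_zero_of_vecMulVec_eq_zero {R ι κ : Type*} [MulZeroClass R]
    [NoZeroDivisors R] {u : ι → R} {v : κ → R} (h : vecMulVec u v = 0) : u = 0 ∨ v = 0 := by
  contrapose! h
  obtain ⟨i, hi⟩ := Function.ne_iff.1 h.1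
  obtain ⟨j, hj⟩ := Function.ne_iff.1 h.2
  exact fun h₀ ↦ mul_ne_zero hi hj (congr_fun₂ h₀ i j)

variable {𝕜 ι κ : Type*} [Field 𝕜] {u u' : ι → 𝕜} {v v' : κ → 𝕜}

theorem vecMulVec_eq_of_mem_hyperbolicOrbit {p : (ι → 𝕜) × (κ → 𝕜)}
    (hp : p ∈ hyperbolicOrbit 𝕜 u v) : vecMulVec p.1 p.2 = vecMulVec u v := by
  obtain ⟨c, rfl⟩ := hp
  rw [smul_vecMulVec, vecMulVec_smul, smul_inv_smul]

theorem vecMulVec_eq_of_mem_closure_hyperbolicOrbit [TopologicalSpace 𝕜] [ContinuousMul 𝕜]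
    [T1Space 𝕜] {p : (ι → 𝕜) × (κ → 𝕜)} (hp : p ∈ closure (hyperbolicOrbit 𝕜 u v)) :
    vecMulVec p.1 p.2 = vecMulVec u v := by
  ext i j
  have isClosed_fiber : IsClosed {q : (ι → 𝕜) × (κ → 𝕜) | q.1 i * q.2 j = u i * v j} :=
    isClosed_singleton.preimage (f := fun q : (ι → 𝕜) × (κ → 𝕜) ↦ q.1 i * q.2 j) (by fun_prop)
  exact closure_minimal
    (fun _ hq ↦ congr_fun₂ (vecMulVec_eq_of_mem_hyperbolicOrbit hq) i j) isClosed_fiber hp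

theorem mem_hyperbolicOrbit_of_vecMulVec_eq (h : vecMulVec u v = vecMulVec u' v')
    (h₀ : vecMulVec u v ≠ 0) : (u', v') ∈ hyperbolicOrbit 𝕜 u v := by
  have entry_eq (i : ι) (j : κ) : u i * v j = u' i * v' j := congr_fun₂ h i j
  obtain ⟨i, j, hij⟩ : ∃ i j, u i * v j ≠ 0 := by
    contrapose! h₀
    exact Matrix.ext h₀
  obtain ⟨hu, hv⟩ := mul_ne_zero_iff.1 hij
  obtain ⟨hu', hv'⟩ := mul_ne_zero_iff.1 (entry_eq i j ▸ hij)
  -- The scalar is read off column `j` to compare the first vectors and row `i` for the second.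
  have ratio_eq : v j / v' j = u' i / u i := by
    rw [div_eq_div_iff hv' hu, mul_comm, entry_eq]
  refine ⟨Units.mk0 (v j / v' j) (div_ne_zero hv hv'), Prod.ext (funext fun k ↦ ?_)
    (funext fun k ↦ ?_)⟩
  · calc v j / v' j * u k = u k * v j / v' j := by ring
      _ = u' k := by rw [entry_eq, mul_div_cancel_right₀ _ hv']
  · calc (v j / v' j)⁻¹ * v k = u i * v k / u' i := by rw [ratio_eq, inv_div]; ring
      _ = v' k := by rw [entry_eq, mul_div_cancel_left₀ _ hu']

theorem orbit_closures_meet_iff_general [TopologicalSpace 𝕜] [ContinuousMul 𝕜] [T1Space 𝕜]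
    [(𝓝[≠] (0 : 𝕜)).NeBot] :
    (closure (hyperbolicOrbit 𝕜 u v) ∩ closure (hyperbolicOrbit 𝕜 u' v')).Nonempty ↔
      vecMulVec u v = vecMulVec u' v' := by
  constructor
  · rintro ⟨p, hp, hp'⟩
    rw [← vecMulVec_eq_of_mem_closure_hyperbolicOrbit hp,
      vecMulVec_eq_of_mem_closure_hyperbolicOrbit hp']
  · intro h
    by_cases h₀ : vecMulVec u v = 0
    · have hu_or_hv := eq_zero_or_eq_zero_of_vecMulVec_eq_zero h₀
      have hu'_or_hv' := eq_zero_or_eq_zero_of_vecMulVec_eq_zero (h.symm.trans h₀)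
      exact ⟨0, zero_mem_closure_hyperbolicOrbit 𝕜 hu_or_hv,
        zero_mem_closure_hyperbolicOrbit 𝕜 hu'_or_hv'⟩
    · exact ⟨(u', v'), subset_closure (mem_hyperbolicOrbit_of_vecMulVec_eq h h₀),
        subset_closure (mem_hyperbolicOrbit_self 𝕜 u' v')⟩

end Invariants

/-- The closures of the orbits of `(u, v)` and `(u', v')` meet if and only if
`u_i·v_j = u'_i·v'_j` for all `i, j`. -/
theorem orbit_closures_meet_iff (m n : ℕ) (u u' : Fin (m + 1) → ℂ)
    (v v' : Fin (n + 1) → ℂ) :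
    (closure (cxOrbit m n u v) ∩ closure (cxOrbit m n u' v')).Nonempty ↔
      ∀ (i : Fin (m + 1)) (j : Fin (n + 1)), u i * v j = u' i * v' j := by
  simp only [cxOrbit_eq_hyperbolicOrbit, orbit_closures_meet_iff_general, ← Matrix.ext_iff,
    vecMulVec_apply]
end

section
/- If u ∈ ℂ^{m+1} and v ∈ ℂ^{n+1} are both nonzero, then the ℂˣ-orbit { (λu, λ⁻¹v) : λ ∈ ℂˣ } of (u, v) is a closed subset of X = ℂ^{m+1} × ℂ^{n+1} in the Euclidean topology. -/
/-!
In `𝕜 × 𝕜` the units form the closed hyperbola `{(x, y) | x * y = 1}`, embedded by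
`l ↦ (l, l⁻¹)`. For nonzero `u` and `v` the maps `x ↦ x • u` and `y ↦ y • v` are closed embeddings,
so their product carries the hyperbola onto a closed set, namely the orbit of `(u, v)`.
-/

open Topology

theorem isClosedEmbedding_units_prodMk {M X Y : Type*} [Monoid M] [TopologicalSpace M] [T1Space M]
    [ContinuousMul M] [TopologicalSpace X] [TopologicalSpace Y] {f : M → X} {g : M → Y}
    (hf : IsClosedEmbedding f) (hg : IsClosedEmbedding g) :
    IsClosedEmbedding fun l : Mˣ ↦ (f l, g ↑l⁻¹) :=
  (hf.prodMap (hg.comp MulOpposite.opHomeomorph.symm.isClosedEmbedding)).comp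
    Units.isClosedEmbedding_embedProduct

section TopologicalVectorSpace

variable {𝕜 E F : Type*} [NontriviallyNormedField 𝕜] [CompleteSpace 𝕜]
  [AddCommGroup E] [Module 𝕜 E] [TopologicalSpace E] [IsTopologicalAddGroup E]
  [ContinuousSMul 𝕜 E] [T2Space E]
  [AddCommGroup F] [Module 𝕜 F] [TopologicalSpace F] [IsTopologicalAddGroup F]
  [ContinuousSMul 𝕜 F] [T2Space F]

theorem isClosedEmbedding_units_smul_inv_smul {u : E} {v : F} (hu : u ≠ 0) (hv : v ≠ 0) :
    IsClosedEmbedding fun l : 𝕜ˣ ↦ (l • u, l⁻¹ • v) :=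
  isClosedEmbedding_units_prodMk (isClosedEmbedding_smul_left (𝕜 := 𝕜) hu)
    (isClosedEmbedding_smul_left (𝕜 := 𝕜) hv)

theorem orbit_isClosed_general {u : E} {v : F} (hu : u ≠ 0) (hv : v ≠ 0) :
    IsClosed (Set.range fun l : 𝕜ˣ ↦ (l • u, l⁻¹ • v)) :=
  (isClosedEmbedding_units_smul_inv_smul hu hv).isClosed_range

end TopologicalVectorSpace

theorem cxOrbit_eq_range (m n : ℕ) (u : Fin (m + 1) → ℂ) (v : Fin (n + 1) → ℂ) :
    cxOrbit m n u v = Set.range fun l : ℂˣ ↦ (l • u, l⁻¹ • v) := by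
  refine Set.ext fun p ↦ exists_congr fun l ↦ ?_
  rw [eq_comm, ← Units.val_inv_eq_inv_val]
  rfl

/-- If `u ≠ 0` and `v ≠ 0`, the `ℂˣ`-orbit of `(u, v)` is closed. -/
theorem orbit_isClosed (m n : ℕ) (u : Fin (m + 1) → ℂ) (v : Fin (n + 1) → ℂ)
    (hu : u ≠ 0) (hv : v ≠ 0) : IsClosed (cxOrbit m n u v) := by
  rw [cxOrbit_eq_range]
  exact orbit_isClosed_general hu hv
end

section
/- The ℂˣ-action on X⁺ = (ℂ^{m+1} ∖ {0}) × ℂ^{n+1} given by λ·(u, v) = (λu, λ⁻¹v) is a proper group action: the map ℂˣ × X⁺ → X⁺ × X⁺ sending (λ, x) to (λ·x, x) is a proper map of topological spaces (the preimage of every compact set is compact; equivalently, it is a closed map with compact fibers). In particular the action is free and every orbit is closed in X⁺, so the orbit space X⁺/ℂˣ is a Hausdorff geometric quotient. -/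
/-- The space `X⁺ = (ℂ^{m+1} ∖ {0}) × ℂ^{n+1}`. -/
abbrev Xplus (m n : ℕ) := {u : Fin (m + 1) → ℂ // u ≠ 0} × (Fin (n + 1) → ℂ)

/-- The `ℂˣ`-action `λ·(u, v) = (λu, λ⁻¹v)` on `X⁺`. -/
noncomputable def cxAct (m n : ℕ) (l : ℂˣ) (x : Xplus m n) : Xplus m n :=
  (⟨fun i => (l : ℂ) * x.1.1 i, fun h => x.1.2 (funext fun i => by
      have h' := congrFun h i
      simpa using h')⟩,
   fun j => (l : ℂ)⁻¹ * x.2 j)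

/-- The `ℂˣ`-orbit equivalence on `X⁺`. -/
def orbitSetoid (m n : ℕ) : Setoid (Xplus m n) where
  r x y := ∃ l : ℂˣ, y = cxAct m n l x
  iseqv := by
    refine ⟨fun x => ⟨1, ?_⟩, ?_, ?_⟩
    · refine Prod.ext (Subtype.ext ?_) ?_ <;> funext ι <;> simp [cxAct]
    · rintro x y ⟨l, rfl⟩
      refine ⟨l⁻¹, Prod.ext (Subtype.ext ?_) ?_⟩ <;> funext ι <;>
        simp [cxAct, mul_comm, mul_assoc]
    · rintro x y z ⟨l, rfl⟩ ⟨l', rfl⟩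
      refine ⟨l' * l, Prod.ext (Subtype.ext ?_) ?_⟩ <;> funext ι <;>
        simp only [cxAct, Units.val_mul, mul_inv] <;> ring

/-!
If `λ u` is close to a point `y`, and `u` to a point `z ≠ 0`, then a linear form `f` with `f z ≠ 0`
recovers the scalar: `λ = f (λ u) / f u` is close to `f y / f z`. So scalars act properly on nonzero
vectors. Properness lifts along continuous equivariant maps, in particular from `ℂ^{m+1} ∖ {0}` to
`X⁺`, whatever the (continuous) action on the second factor.
-/

open Filter MulAction Topology

section ProperActions

variable {G X Y : Type*} [Group G] [TopologicalSpace G] [TopologicalSpace X] [MulAction G X]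

theorem isClosed_orbit_of_properSMul [ProperSMul G X] (x : X) : IsClosed (orbit G x) := by
  simpa only [Set.smul_singleton, Set.image_univ, orbit] using
    (isClosed_univ (X := G)).smul_right_of_isCompact (isCompact_singleton (x := x))

variable [TopologicalSpace Y] [MulAction G Y]

theorem properSMul_of_equivariant [ContinuousSMul G X] [T2Space X] [ProperSMul G Y]
    (f : X →[G] Y) (hf : Continuous f) : ProperSMul G X := by
  refine properSMul_iff_continuousSMul_ultrafilter_tendsto_t2.2 ⟨inferInstance, ?_⟩
  intro 𝒰 x₁ x₂ hx
  have hfx : Tendsto (fun p : G × Y ↦ (p.1 • p.2, p.2)) (𝒰.map (Prod.map id f))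
      (𝓝 (f x₁, f x₂)) := by
    simpa only [Ultrafilter.coe_map, tendsto_map'_iff, Function.comp_def, Prod.map, id, map_smul]
      using ((hf.prodMap hf).tendsto (x₁, x₂)).comp hx
  obtain ⟨g, -, hg⟩ :=
    (properSMul_iff_continuousSMul_ultrafilter_tendsto.1 ‹ProperSMul G Y›).2 _ _ _ hfx
  exact ⟨g, hg.comp tendsto_map⟩

end ProperActions

section NonzeroVectors

instance instContinuousSMulUnitsNonzero {R M : Type*} [Monoid R] [TopologicalSpace R]
    [AddCommMonoid M] [TopologicalSpace M] [DistribMulAction R M] [ContinuousSMul R M] :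
    ContinuousSMul Rˣ {x : M // x ≠ 0} :=
  IsInducing.subtypeVal.continuousSMul (f := id) continuous_id (Units.smul_coe R M _ _)

variable {K V : Type*} [DivisionRing K] [AddCommGroup V] [Module K V]

theorem eq_one_of_units_smul_eq_self {k : Kˣ} {u : {v : V // v ≠ 0}} (h : k • u = u) : k = 1 :=
  Units.ext <| smul_left_injective K u.2 <| (congrArg Subtype.val h).trans (one_smul K u.1).symm

variable [TopologicalSpace K] [IsTopologicalDivisionRing K] [T2Space K] [TopologicalSpace V]

theorem tendsto_of_tendsto_smul {α : Type*} {F : Filter α} {c : α → K} {u : α → V} {y z : V}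
    (f : StrongDual K V) (hz : f z ≠ 0) (hu : Tendsto u F (𝓝 z))
    (hcu : Tendsto (fun a ↦ c a • u a) F (𝓝 y)) : Tendsto c F (𝓝 (f y / f z)) := by
  have hfu : Tendsto (fun a ↦ f (u a)) F (𝓝 (f z)) := (f.continuous.tendsto z).comp hu
  have hfcu : Tendsto (fun a ↦ f (c a • u a)) F (𝓝 (f y)) := (f.continuous.tendsto y).comp hcu
  refine (hfcu.div hfu hz).congr' ?_
  filter_upwards [hfu.eventually_ne hz] with a ha
  rw [Pi.div_apply, map_smul, smul_eq_mul, mul_div_cancel_right₀ _ ha]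

variable [ContinuousSMul K V] [SeparatingDual K V]

instance instProperSMulUnitsNonzero : ProperSMul Kˣ {v : V // v ≠ 0} := by
  have : T2Space V := SeparatingDual.t2Space (R := K)
  refine properSMul_iff_continuousSMul_ultrafilter_tendsto_t2.2 ⟨inferInstance, ?_⟩
  rintro 𝒰 ⟨y, hy⟩ ⟨z, hz⟩ hyz
  have hu : Tendsto (fun p : Kˣ × {v : V // v ≠ 0} ↦ (p.2 : V)) 𝒰 (𝓝 z) :=
    ((continuous_subtype_val.comp continuous_snd).tendsto _).comp hyz
  have hcu : Tendsto (fun p : Kˣ × {v : V // v ≠ 0} ↦ (p.1 : K) • (p.2 : V)) 𝒰 (𝓝 y) :=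
    ((continuous_subtype_val.comp continuous_fst).tendsto _).comp hyz
  obtain ⟨f, hfz⟩ := SeparatingDual.exists_ne_zero (R := K) hz
  have hc := tendsto_of_tendsto_smul f hfz hu hcu
  have hlim : (f y / f z) • z = y := tendsto_nhds_unique (hc.smul hu) hcu
  have hne : f y / f z ≠ 0 := fun h ↦ hy <| by rw [← hlim, h, zero_smul]
  exact ⟨Units.mk0 _ hne, Units.isEmbedding_val₀.tendsto_nhds_iff.2 hc⟩

theorem cxAction_isProper_general {X : Type*} [TopologicalSpace X] [T2Space X] [MulAction Kˣ X]
    [ContinuousSMul Kˣ X] (f : X →[Kˣ] {v : V // v ≠ 0}) (hf : Continuous f) :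
    IsProperMap (fun p : Kˣ × X ↦ (p.1 • p.2, p.2)) ∧
    (∀ (k : Kˣ) (x : X), k • x = x → k = 1) ∧
    (∀ x : X, IsClosed (orbit Kˣ x)) ∧
    T2Space (Quotient (orbitRel Kˣ X)) :=
  have : ProperSMul Kˣ X := properSMul_of_equivariant f hf
  ⟨ProperSMul.isProperMap_smul_pair,
    fun k x h ↦ eq_one_of_units_smul_eq_self ((map_smul f k x).symm.trans (congrArg f h)),
    isClosed_orbit_of_properSMul, inferInstance⟩

end NonzeroVectors

theorem cxAct_eq_smul_prod {m n : ℕ} (l : ℂˣ) (x : Xplus m n) :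
    cxAct m n l x = (l • x.1, l⁻¹ • x.2) :=
  Prod.ext rfl <| funext fun j ↦ congrArg (· * x.2 j) (Units.val_inv_eq_inv_val l).symm

/-- The action `cxAct`, in scalar notation. It is local because the product `X⁺` also carries the
diagonal action of `ℂˣ`. -/
noncomputable local instance instSMulXplus (m n : ℕ) : SMul ℂˣ (Xplus m n) := ⟨cxAct m n⟩

noncomputable local instance instMulActionXplus (m n : ℕ) : MulAction ℂˣ (Xplus m n) where
  one_smul x := by
    change cxAct m n 1 x = x
    simp only [cxAct_eq_smul_prod, inv_one, one_smul]
  mul_smul k l x := by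
    change cxAct m n (k * l) x = cxAct m n k (cxAct m n l x)
    simp only [cxAct_eq_smul_prod, mul_inv, mul_smul]

local instance instContinuousSMulXplus (m n : ℕ) : ContinuousSMul ℂˣ (Xplus m n) where
  continuous_smul := by
    change Continuous fun p : ℂˣ × Xplus m n ↦ cxAct m n p.1 p.2
    simp only [cxAct_eq_smul_prod]
    fun_prop

/-- The equivariant projection from `X⁺` onto `ℂ^{m+1} ∖ {0}`, along which properness is lifted. -/
def nonzeroFactor (m n : ℕ) : Xplus m n →[ℂˣ] {u : Fin (m + 1) → ℂ // u ≠ 0} where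
  toFun := Prod.fst
  map_smul' _ _ := rfl

theorem setOf_eq_cxAct_eq_orbit {m n : ℕ} (x : Xplus m n) :
    {y | ∃ l : ℂˣ, y = cxAct m n l x} = orbit ℂˣ x :=
  Set.ext fun _ ↦ exists_congr fun _ ↦ eq_comm

theorem orbitSetoid_eq_orbitRel (m n : ℕ) : orbitSetoid m n = orbitRel ℂˣ (Xplus m n) :=
  Setoid.ext fun x y ↦ by
    rw [(orbitSetoid m n).comm', orbitRel_apply, ← setOf_eq_cxAct_eq_orbit]
    rfl

/-- The `ℂˣ`-action on `X⁺ = (ℂ^{m+1} ∖ {0}) × ℂ^{n+1}` is proper: the map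
`(λ, x) ↦ (λ·x, x)` is a proper map.  In particular the action is free, every orbit is
closed in `X⁺`, and the orbit space is Hausdorff. -/
theorem cxAction_isProper (m n : ℕ) :
    IsProperMap (fun p : ℂˣ × Xplus m n => (cxAct m n p.1 p.2, p.2)) ∧
    (∀ (l : ℂˣ) (x : Xplus m n), cxAct m n l x = x → l = 1) ∧
    (∀ x : Xplus m n, IsClosed {y | ∃ l : ℂˣ, y = cxAct m n l x}) ∧
    T2Space (Quotient (orbitSetoid m n)) := by
  simp_rw [setOf_eq_cxAct_eq_orbit]
  rw [orbitSetoid_eq_orbitRel]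
  exact cxAction_isProper_general (nonzeroFactor m n) continuous_fst
end
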